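/- Let a and b be ideals linked by the zero ideal over M (so abM = 0, bM = 0 :_M a, aM = 0 :_M b, aM ≠ M ≠ bM). Then cd(a, M) = cd(a, M/bM), where cd denotes cohomological dimension via local cohomology. -/

import Mathlib

universe u

open RingTheory.Sequence CategoryTheory

noncomputable section

/-- `N :_M a`, set of `m : M` with `a • m ⊆ N`. -/
def Submodule.modColon {R : Type u} [CommRing R] {M : Type u} [AddCommGroup M] [Module R M]
    (N : Submodule R M) (a : Ideal R) : Submodule R M :=
  ⨅ r ∈ a, N.comap (LinearMap.lsmul R M r)

/-- The ideals `a` and `b` are linked by `I` over `M`: `I ⊆ a ⊓ b` is generated by an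
`M`-regular sequence, `bM = IM :_M a`, `aM = IM :_M b`, and `aM ≠ M ≠ bM`. -/
def Ideal.IsLinkedBy {R : Type u} [CommRing R] (M : Type u) [AddCommGroup M] [Module R M]
    (I a b : Ideal R) : Prop :=
  (∃ rs : List R, RingTheory.Sequence.IsRegular M rs ∧ I = Ideal.ofList rs) ∧
  I ≤ a ⊓ b ∧
  a • (⊤ : Submodule R M) ≠ ⊤ ∧ b • (⊤ : Submodule R M) ≠ ⊤ ∧
  Submodule.modColon (I • (⊤ : Submodule R M)) a = b • (⊤ : Submodule R M) ∧
  Submodule.modColon (I • (⊤ : Submodule R M)) b = a • (⊤ : Submodule R M)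

/-- Cohomological dimension `cd(a, M) = sup { i | H^i_a(M) ≠ 0 }`. -/
def cohDim {R : Type u} [CommRing R] (a : Ideal R) (M : Type u) [AddCommGroup M]
    [Module R M] : ℕ∞ :=
  sSup {n : ℕ∞ | ∃ i : ℕ, n = i ∧ Nontrivial ↥((localCohomology a i).obj (ModuleCat.of R M))}

/-- `grade_M(a)`: the supremum of lengths of `M`-regular sequences contained in `a`. -/
def gradeM {R : Type u} [CommRing R] (a : Ideal R) (M : Type u) [AddCommGroup M]
    [Module R M] : ℕ :=
  sSup {n : ℕ | ∃ rs : List R, rs.length = n ∧ (∀ r ∈ rs, r ∈ a) ∧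
    RingTheory.Sequence.IsRegular M rs}

variable {R : Type u} [CommRing R] [IsNoetherianRing R]
variable {M : Type u} [AddCommGroup M] [Module R M] [Module.Finite R M] [Nontrivial M]

/-!
Elements of `bM` are killed by `a`, so it is enough to show `cd(a, M) = cd(a, M ⧸ N)` for every
`a`-power torsion submodule `N`. The module `H^n_a(N)` is the colimit of the `Ext^n(A ⧸ a^t, N)`,
so for `n > 0` it vanishes iff every class in some `Ext^n(A ⧸ a^t, N)` dies after restriction to
some `A ⧸ a^s`. By Artin–Rees the torsion part of an injective module is again injective, so a
torsion module embeds in a torsion injective module with torsion cokernel. Dimension shifting along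
such embeddings reduces the vanishing of all classes to degree one, where it holds because a
homomorphism from `A ⧸ a^t` to the cokernel lifts after restriction to some `A ⧸ a^s`. The long
exact sequence of `0 → N → M → M ⧸ N → 0` then shows that `M` and `M ⧸ N` have the same nonzero
local cohomology in positive degrees, and degree zero does not affect the supremum.

Local cohomology is built on the `Ext` defined by projective resolutions, while long exact sequences
are available for `Abelian.Ext`; the two are compared through cocycles of a projective resolution.
-/

open Limits Opposite

universe w

section KerEq

variable {G H K : Type*} [AddGroup G] [AddGroup H] [AddGroup K] {f : G →+ H} {g : G →+ K}

/-- The isomorphism between the targets of two surjections with the same kernel, compatible with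
the surjections. -/
def addEquivOfKerEq (hf : Function.Surjective f) (hg : Function.Surjective g)
    (h : f.ker = g.ker) : H ≃+ K :=
  (QuotientAddGroup.quotientKerEquivOfSurjective f hf).symm.trans <|
    (QuotientAddGroup.quotientAddEquivOfEq h).trans <|
      QuotientAddGroup.quotientKerEquivOfSurjective g hg

lemma addEquivOfKerEq_apply (hf : Function.Surjective f) (hg : Function.Surjective g)
    (h : f.ker = g.ker) (x : G) : addEquivOfKerEq hf hg h (f x) = g x := by
  have symm_apply : (QuotientAddGroup.quotientKerEquivOfSurjective f hf).symm (f x) = x :=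
    (AddEquiv.symm_apply_eq _).2 rfl
  simp only [addEquivOfKerEq, AddEquiv.trans_apply, symm_apply]
  rfl

end KerEq

section HomComplex

variable (A : Type*) [CommRing A] {C : Type*} [Category* C] [Abelian C] [Linear A C]
variable {K L : ChainComplex C ℕ}

/-- Precomposition with a chain map `K ⟶ L`, as a map of cochain complexes
`Hom(L, Y) ⟶ Hom(K, Y)`. -/
def linearYonedaObjMap (φ : K ⟶ L) (Y : C) :
    L.linearYonedaObj A Y ⟶ K.linearYonedaObj A Y where
  f i := ((linearYoneda A C).obj Y).map (φ.f i).op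
  comm' i j _ := by
    ext f
    exact (φ.comm_assoc j i f).symm

/-- The morphism `K.X n ⟶ Y` underlying an `n`-cocycle of the cochain complex `Hom(K, Y)`. -/
def cyclesToHom (K : ChainComplex C ℕ) (Y : C) (n : ℕ) :
    (K.linearYonedaObj A Y).cycles n →+ (K.X n ⟶ Y) :=
  ((K.linearYonedaObj A Y).iCycles n).hom.toAddMonoidHom

variable {A} {Y : C} {n : ℕ}

lemma cyclesToHom_injective : Function.Injective (cyclesToHom A K Y n) :=
  (ModuleCat.mono_iff_injective ((K.linearYonedaObj A Y).iCycles n)).1 inferInstance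

lemma d_comp_cyclesToHom (z : (K.linearYonedaObj A Y).cycles n) :
    K.d (n + 1) n ≫ cyclesToHom A K Y n z = 0 :=
  congr($((K.linearYonedaObj A Y).iCycles_d n (n + 1)) z)

variable (A) in
lemma exists_cyclesToHom_eq (f : K.X n ⟶ Y) (hf : K.d (n + 1) n ≫ f = 0) :
    ∃ z, cyclesToHom A K Y n z = f :=
  have exactness := ShortComplex.exact_of_f_is_kernel
    (.mk _ _ ((K.linearYonedaObj A Y).iCycles_d n (n + 1)))
    ((K.linearYonedaObj A Y).cyclesIsKernel n (n + 1) (by simp))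
  (ShortComplex.moduleCat_exact_iff _).1 exactness f hf

lemma cyclesToHom_toCycles (g : K.X n ⟶ Y) :
    cyclesToHom A K Y (n + 1) ((K.linearYonedaObj A Y).toCycles n (n + 1) g) =
      K.d (n + 1) n ≫ g :=
  congr($((K.linearYonedaObj A Y).toCycles_i n (n + 1)) g)

lemma cyclesToHom_cyclesMap (φ : K ⟶ L) (z : (L.linearYonedaObj A Y).cycles n) :
    cyclesToHom A K Y n (HomologicalComplex.cyclesMap (linearYonedaObjMap A φ Y) n z) =
      φ.f n ≫ cyclesToHom A L Y n z :=
  congr($(HomologicalComplex.cyclesMap_i (linearYonedaObjMap A φ Y) n) z)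

lemma homologyπ_eq_zero_iff (z : (K.linearYonedaObj A Y).cycles (n + 1)) :
    (K.linearYonedaObj A Y).homologyπ (n + 1) z = 0 ↔
      ∃ g : K.X n ⟶ Y, K.d (n + 1) n ≫ g = cyclesToHom A K Y (n + 1) z := by
  have exactness := ShortComplex.exact_of_g_is_cokernel
    (.mk _ _ ((K.linearYonedaObj A Y).toCycles_comp_homologyπ n (n + 1)))
    ((K.linearYonedaObj A Y).homologyIsCokernel n (n + 1) (by simp))
  simp_rw [← cyclesToHom_toCycles (A := A), cyclesToHom_injective.eq_iff]
  exact (ShortComplex.ShortExact.moduleCat_exact_iff_function_exact _).1 exactness z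

lemma homologyπ_surjective : Function.Surjective ((K.linearYonedaObj A Y).homologyπ n) :=
  (ModuleCat.epi_iff_surjective _).1 inferInstance

end HomComplex

section CyclesToExt

variable (A : Type*) [CommRing A] {C : Type*} [Category* C] [Abelian C] [Linear A C]
  [HasExt.{w} C]
variable {X X' : C} {θ : X' ⟶ X} (P : ProjectiveResolution X) {P' : ProjectiveResolution X'}
  (Y : C) (n : ℕ)

/-- The extension class represented by a cocycle of `Hom(P, Y)`, where `P` is a projective
resolution of `X`. -/
def cyclesToExt : (P.complex.linearYonedaObj A Y).cycles n →+ Abelian.Ext.{w} X Y n where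
  toFun z := P.extMk (cyclesToHom A P.complex Y n z) (n + 1) rfl (d_comp_cyclesToHom z)
  map_zero' := by simp only [map_zero, P.extMk_zero]
  map_add' z z' := by simp only [map_add, P.add_extMk]

lemma cyclesToExt_surjective : Function.Surjective (cyclesToExt.{w} A P Y n) := by
  intro x
  obtain ⟨f, hf, rfl⟩ := P.extMk_surjective x (n + 1) rfl
  obtain ⟨z, rfl⟩ := exists_cyclesToHom_eq A f hf
  exact ⟨z, rfl⟩

lemma ker_cyclesToExt :
    (cyclesToExt.{w} A P Y (n + 1)).ker =
      ((P.complex.linearYonedaObj A Y).homologyπ (n + 1)).hom.toAddMonoidHom.ker := by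
  ext z
  exact (P.extMk_eq_zero_iff _ (n + 2) rfl (d_comp_cyclesToHom z) n rfl).trans
    (homologyπ_eq_zero_iff z).symm

/-- `Abelian.Ext` in positive degrees is computed by a projective resolution of the first
argument. -/
def homologyEquivExt :
    (P.complex.linearYonedaObj A Y).homology (n + 1) ≃+ Abelian.Ext.{w} X Y (n + 1) :=
  addEquivOfKerEq (f := ((P.complex.linearYonedaObj A Y).homologyπ (n + 1)).hom.toAddMonoidHom)
    homologyπ_surjective (cyclesToExt_surjective A P Y (n + 1)) (ker_cyclesToExt A P Y n).symm

variable {A P Y n}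

lemma homologyEquivExt_homologyπ (z : (P.complex.linearYonedaObj A Y).cycles (n + 1)) :
    homologyEquivExt.{w} A P Y n ((P.complex.linearYonedaObj A Y).homologyπ (n + 1) z) =
      cyclesToExt.{w} A P Y (n + 1) z :=
  addEquivOfKerEq_apply _ _ _ z

lemma cyclesToExt_cyclesMap (φ : P'.Hom P θ) (z : (P.complex.linearYonedaObj A Y).cycles n) :
    cyclesToExt.{w} A P' Y n
        (HomologicalComplex.cyclesMap (linearYonedaObjMap A φ.hom Y) n z) =
      (Abelian.Ext.mk₀ θ).comp (cyclesToExt.{w} A P Y n z) (zero_add n) := by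
  simp only [cyclesToExt, AddMonoidHom.coe_mk, ZeroHom.coe_mk, cyclesToHom_cyclesMap,
    ProjectiveResolution.mk₀_comp_extMk _ _ _ _ φ]

lemma homologyEquivExt_homologyMap (φ : P'.Hom P θ)
    (x : (P.complex.linearYonedaObj A Y).homology (n + 1)) :
    homologyEquivExt.{w} A P' Y n
        (HomologicalComplex.homologyMap (linearYonedaObjMap A φ.hom Y) (n + 1) x) =
      (Abelian.Ext.mk₀ θ).comp (homologyEquivExt.{w} A P Y n x) (zero_add (n + 1)) := by
  obtain ⟨z, rfl⟩ := homologyπ_surjective x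
  have naturality :=
    congr($(HomologicalComplex.homologyπ_naturality (linearYonedaObjMap A φ.hom Y) (n + 1)) z)
  simp only [ModuleCat.comp_apply] at naturality
  rw [naturality, homologyEquivExt_homologyπ, homologyEquivExt_homologyπ, cyclesToExt_cyclesMap]

end CyclesToExt

section LeftDerivedExt

variable {A : Type*} [CommRing A] {C : Type*} [Category* C] [Abelian C] [Linear A C]
  [EnoughProjectives C] {X X' : C}

lemma isoExt_hom_naturality {P : ProjectiveResolution X} {P' : ProjectiveResolution X'}
    {θ : X' ⟶ X} (φ : P'.Hom P θ) (n : ℕ) (Y : C) :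
    ((Ext A C n).map θ.op).app Y ≫ (P'.isoExt n Y).hom =
      (P.isoExt n Y).hom ≫
        HomologicalComplex.homologyMap (linearYonedaObjMap A φ.hom Y) n := by
  have leftDerived := congrArg
    (·.unop ≫ ((P'.complex.linearYonedaObj A Y).sc n).homologyOpIso.inv.unop)
    (ProjectiveResolution.isoLeftDerivedObj_inv_naturality θ P' P φ.hom
      (φ.hom_f_zero_comp_π_f_zero.trans (by simp)) ((linearYoneda A C).obj Y).rightOp n)
  have homologyOp := congrArg
    ((P.isoLeftDerivedObj ((linearYoneda A C).obj Y).rightOp n).inv.unop ≫ ·.unop)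
    (ShortComplex.homologyOpIso_inv_naturality
      ((HomologicalComplex.shortComplexFunctor _ _ n).map (linearYonedaObjMap A φ.hom Y)))
  exact (Category.assoc _ _ _).symm.trans <| leftDerived.trans <|
    (Category.assoc _ _ _).trans <| homologyOp.symm.trans (Category.assoc _ _ _).symm

variable [HasExt.{w} C]

variable (A) in
/-- The comparison, in positive degrees, between the `Ext` obtained by deriving `Hom(-, Y)` and
`Abelian.Ext`. -/
def leftDerivedExtEquiv (X Y : C) (n : ℕ) :
    ((Ext A C (n + 1)).obj (op X)).obj Y ≃+ Abelian.Ext.{w} X Y (n + 1) :=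
  ((projectiveResolution X).isoExt (n + 1) Y).toLinearEquiv.toAddEquiv.trans
    (homologyEquivExt.{w} A _ Y n)

lemma leftDerivedExtEquiv_map (θ : X' ⟶ X) (Y : C) (n : ℕ)
    (x : ((Ext A C (n + 1)).obj (op X)).obj Y) :
    leftDerivedExtEquiv.{w} A X' Y n (((Ext A C (n + 1)).map θ.op).app Y x) =
      (Abelian.Ext.mk₀ θ).comp (leftDerivedExtEquiv.{w} A X Y n x) (zero_add (n + 1)) := by
  let φ : (projectiveResolution X').Hom (projectiveResolution X) θ :=
    ⟨ProjectiveResolution.lift θ _ _,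
      (ProjectiveResolution.lift_commutes_zero _ _ _).trans (by simp)⟩
  have naturality := congr($(isoExt_hom_naturality (A := A) φ (n + 1) Y) x)
  exact (congrArg (homologyEquivExt.{w} A _ Y n) naturality).trans
    (homologyEquivExt_homologyMap φ _)

end LeftDerivedExt

section ProExt

variable {C : Type*} [Category* C] [Abelian C] [HasExt.{w} C] {D : Type*} [Category* D]

/-- Vanishing of the filtered colimit of the groups `Ext^n(X t, Y)` along a cofiltered diagram `X`:
every class becomes zero after restriction along some transition map of `X`. -/
def ProExtVanishes (X : D ⥤ C) (Y : C) (n : ℕ) : Prop :=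
  ∀ (t : D) (x : Abelian.Ext.{w} (X.obj t) Y n),
    ∃ (s : D) (f : s ⟶ t), (Abelian.Ext.mk₀ (X.map f)).comp x (zero_add n) = 0

namespace ProExtVanishes

open Abelian

variable {X : D ⥤ C} {S : ShortComplex C} {n : ℕ}

lemma of_shortExact₂ (hS : S.ShortExact) (h₁ : ProExtVanishes.{w} X S.X₁ n)
    (h₃ : ProExtVanishes.{w} X S.X₃ n) : ProExtVanishes.{w} X S.X₂ n := by
  intro t x
  obtain ⟨s, f, hf⟩ := h₃ t (x.comp (Ext.mk₀ S.g) (add_zero n))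
  obtain ⟨y, hy⟩ := Ext.covariant_sequence_exact₂ _ hS
    ((Ext.mk₀ (X.map f)).comp x (zero_add n)) (by rwa [Ext.comp_assoc_of_third_deg_zero])
  obtain ⟨r, g, hg⟩ := h₁ s y
  refine ⟨r, g ≫ f, ?_⟩
  rw [X.map_comp, ← Ext.mk₀_comp_mk₀_assoc, ← hy, ← Ext.comp_assoc_of_third_deg_zero, hg,
    Ext.zero_comp]

lemma of_shortExact₃ (hS : S.ShortExact) (h₁ : ProExtVanishes.{w} X S.X₁ (n + 1))
    (h₂ : ProExtVanishes.{w} X S.X₂ n) : ProExtVanishes.{w} X S.X₃ n := by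
  intro t x
  obtain ⟨s, f, hf⟩ := h₁ t (x.comp hS.extClass rfl)
  obtain ⟨y, hy⟩ := Ext.covariant_sequence_exact₃ _ hS
    ((Ext.mk₀ (X.map f)).comp x (zero_add n)) rfl (by rwa [Ext.comp_assoc _ _ _ _ rfl (by lia)])
  obtain ⟨r, g, hg⟩ := h₂ s y
  refine ⟨r, g ≫ f, ?_⟩
  rw [X.map_comp, ← Ext.mk₀_comp_mk₀_assoc, ← hy, ← Ext.comp_assoc_of_third_deg_zero, hg,
    Ext.zero_comp]

lemma succ_of_shortExact₁ (hS : S.ShortExact) [Injective S.X₂]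
    (h₃ : ProExtVanishes.{w} X S.X₃ n) : ProExtVanishes.{w} X S.X₁ (n + 1) := by
  intro t x
  obtain ⟨y, rfl⟩ := Ext.covariant_sequence_exact₁ _ hS x (Ext.eq_zero_of_injective _) rfl
  obtain ⟨s, f, hf⟩ := h₃ t y
  refine ⟨s, f, ?_⟩
  rw [← Ext.comp_assoc _ _ _ (zero_add n) rfl (by lia), hf, Ext.zero_comp]

lemma one_of_shortExact₁ (hS : S.ShortExact) [Injective S.X₂]
    (lifts : ∀ (t : D) (k : X.obj t ⟶ S.X₃),
      ∃ (s : D) (f : s ⟶ t) (l : X.obj s ⟶ S.X₂), l ≫ S.g = X.map f ≫ k) :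
    ProExtVanishes.{w} X S.X₁ 1 := by
  intro t x
  obtain ⟨y, rfl⟩ := Ext.covariant_sequence_exact₁ _ hS x (Ext.eq_zero_of_injective _) rfl
  obtain ⟨k, rfl⟩ := (Ext.mk₀_bijective _ _).2 y
  obtain ⟨s, f, l, hl⟩ := lifts t k
  refine ⟨s, f, ?_⟩
  rw [Ext.mk₀_comp_mk₀_assoc, ← hl, ← Ext.mk₀_comp_mk₀_assoc, hS.comp_extClass, Ext.comp_zero]

end ProExtVanishes

end ProExt

section FilteredColimit

lemma subsingleton_colimit_iff {A : Type*} [Ring A] {J : Type w} [Category* J] [IsFiltered J]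
    (G : J ⥤ ModuleCat.{max u w} A) [HasColimit G] [PreservesColimit G (forget _)] :
    Subsingleton (colimit G : ModuleCat.{max u w} A) ↔
      ∀ (t : J) (x : G.obj t), ∃ (s : J) (f : t ⟶ s), G.map f x = 0 := by
  constructor
  · intro _ t x
    exact Concrete.colimit_rep_eq_zero A G t x (Subsingleton.elim _ _)
  · intro h
    refine subsingleton_of_forall_eq 0 fun y ↦ ?_
    obtain ⟨t, x, rfl⟩ := Concrete.colimit_exists_rep G y
    obtain ⟨s, f, hf⟩ := h t x
    rw [← colimit.w G f, ConcreteCategory.comp_apply, hf, map_zero]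

open localCohomology in
lemma subsingleton_ofDiagram_iff {A : Type max u w} [CommRing A] {D : Type w} [SmallCategory D]
    [IsCofiltered D] (I : D ⥤ Ideal A) (n : ℕ) (N : ModuleCat.{max u w} A) :
    Subsingleton ((ofDiagram.{u, w} I (n + 1)).obj N) ↔
      ProExtVanishes.{max u w} (ringModIdeals I) N (n + 1) := by
  have := preservesFilteredColimitsOfSize_shrink.{w, max u w, w, max u w}
    (forget (ModuleCat.{max u w} A))
  let e (t : D) := leftDerivedExtEquiv.{max u w} A ((ringModIdeals I).obj t) N n
  have comp_eq_zero_iff {t s : D} (f : s ⟶ t) (x) :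
      (Abelian.Ext.mk₀ ((ringModIdeals I).map f)).comp (e t x) (zero_add (n + 1)) = 0 ↔
        ((diagram I (n + 1)).map f.op).app N x = 0 := by
    rw [← leftDerivedExtEquiv_map]
    exact map_eq_zero_iff _ (e s).injective
  have colimitIso := colimitObjIsoColimitCompEvaluation (diagram I (n + 1)) N
  refine colimitIso.toLinearEquiv.toEquiv.subsingleton_congr.trans <|
    (subsingleton_colimit_iff.{u} _).trans ⟨fun h t x ↦ ?_, fun h t x ↦ ?_⟩
  · obtain ⟨x, rfl⟩ := (e t).surjective x
    obtain ⟨s, f, hf⟩ := h (op t) x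
    exact ⟨s.unop, f.unop, (comp_eq_zero_iff f.unop x).2 hf⟩
  · obtain ⟨s, f, hf⟩ := h t.unop (e t.unop x)
    exact ⟨op s, f.op, (comp_eq_zero_iff f x).1 hf⟩

end FilteredColimit

section PowTorsion

open Submodule

variable {A E F : Type*} [CommRing A] [AddCommGroup E] [Module A E] [AddCommGroup F] [Module A F]

/-- The `a`-power torsion submodule `Γ_a(E)`: the elements killed by some power of `a`. -/
def powTorsion (a : Ideal A) (E : Type*) [AddCommGroup E] [Module A E] : Submodule A E :=
  ⨆ n : ℕ, torsionBySet A E (a ^ n : Ideal A)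

/-- A module is `a`-power torsion if each of its elements is killed by some power of `a`, the
exponent depending on the element. -/
def IsPowTorsion (a : Ideal A) (E : Type*) [AddCommGroup E] [Module A E] : Prop :=
  powTorsion a E = ⊤

variable {a : Ideal A}

lemma mem_powTorsion_iff {x : E} : x ∈ powTorsion a E ↔ ∃ n : ℕ, ∀ r ∈ a ^ n, r • x = 0 := by
  rw [powTorsion, mem_iSup_of_directed _
    (directed_of_isDirected_le fun i j h ↦ torsionBySet_le_torsionBySet_pow i j h a)]
  simp only [mem_torsionBySet_iff, Subtype.forall, SetLike.mem_coe]

lemma isPowTorsion_iff : IsPowTorsion a E ↔ ∀ x : E, ∃ n : ℕ, ∀ r ∈ a ^ n, r • x = 0 := by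
  simp only [IsPowTorsion, eq_top_iff', mem_powTorsion_iff]

lemma isPowTorsion_coe_iff {N : Submodule A E} : IsPowTorsion a N ↔ N ≤ powTorsion a E := by
  simp only [isPowTorsion_iff, Subtype.forall, Subtype.ext_iff, coe_smul, coe_zero,
    SetLike.le_def, mem_powTorsion_iff]

namespace IsPowTorsion

lemma of_surjective {f : E →ₗ[A] F} (hf : Function.Surjective f) (hE : IsPowTorsion a E) :
    IsPowTorsion a F := by
  rw [isPowTorsion_iff] at hE ⊢
  refine hf.forall.2 fun x ↦ (hE x).imp fun n hn r hr ↦ ?_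
  rw [← map_smul, hn r hr, map_zero]

lemma range_le_powTorsion (hE : IsPowTorsion a E) (f : E →ₗ[A] F) :
    LinearMap.range f ≤ powTorsion a F :=
  isPowTorsion_coe_iff.1 (hE.of_surjective f.surjective_rangeRestrict)

lemma exists_isTorsionBySet [Module.Finite A E] (hE : IsPowTorsion a E) :
    ∃ n : ℕ, Module.IsTorsionBySet A E (a ^ n : Ideal A) := by
  obtain ⟨n, hn⟩ := Module.Finite.fg_top.stabilizes_of_iSup_eq
    ⟨fun n : ℕ ↦ torsionBySet A E (a ^ n : Ideal A), fun i j h ↦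
      torsionBySet_le_torsionBySet_pow i j h a⟩ hE
  exact ⟨n, (Module.isTorsionBySet_iff_torsionBySet_eq_top _).2 hn.symm⟩

lemma exists_comap_pow_smul_top_le_ker [IsNoetherianRing A] [Module.Finite A F]
    (hE : IsPowTorsion a E) {N : Submodule A F} (g : N →ₗ[A] E) :
    ∃ n : ℕ, (a ^ n • ⊤ : Submodule A F).comap N.subtype ≤ LinearMap.ker g := by
  have range_torsion : IsPowTorsion a (LinearMap.range g) :=
    isPowTorsion_coe_iff.2 (le_top.trans_eq hE.symm)
  obtain ⟨n, hn⟩ := range_torsion.exists_isTorsionBySet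
  have smul_le_ker : (a ^ n • ⊤ : Submodule A N) ≤ LinearMap.ker g :=
    smul_le.2 fun r hr x _ ↦ (g.map_smul r x).trans congr($(@hn ⟨g x, x, rfl⟩ ⟨r, hr⟩).1)
  obtain ⟨k, artin_rees⟩ := a.exists_pow_inf_eq_pow_smul N
  have inf_le :
      (a ^ (n + k) • ⊤ ⊓ N : Submodule A F) ≤ (a ^ n • ⊤ : Submodule A N).map N.subtype := by
    rw [artin_rees _ le_add_self, Nat.add_sub_cancel, map_smul'', map_subtype_top]
    exact smul_mono_right _ inf_le_right
  refine ⟨n + k, fun x hx ↦ ?_⟩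
  obtain ⟨y, hy, hyx⟩ := inf_le ⟨hx, x.2⟩
  exact smul_le_ker (Subtype.ext hyx ▸ hy)

end IsPowTorsion

lemma exists_extend_of_comap_le_ker (hE : Module.Baer A E) {N K : Submodule A F}
    (g : N →ₗ[A] E) (hg : K.comap N.subtype ≤ LinearMap.ker g) :
    ∃ h : F →ₗ[A] E, h ∘ₗ N.subtype = g ∧ K ≤ LinearMap.ker h := by
  have mapQ_injective : Function.Injective ((K.comap N.subtype).mapQ K N.subtype le_rfl) :=
    LinearMap.ker_eq_bot.1 (by rw [ker_mapQ, mkQ_map_self])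
  obtain ⟨h, hh⟩ := hE.extension_property _ mapQ_injective (liftQ _ g hg)
  refine ⟨h ∘ₗ K.mkQ, ?_, K.ker_mkQ.ge.trans (LinearMap.ker_le_ker_comp _ _)⟩
  ext x
  exact congr($hh (Submodule.Quotient.mk x))

lemma baer_powTorsion [IsNoetherianRing A] (hE : Module.Baer A E) :
    Module.Baer A (powTorsion a E) := by
  intro I g
  have torsion : IsPowTorsion a (powTorsion a E) := isPowTorsion_coe_iff.2 le_rfl
  obtain ⟨n, hn⟩ := torsion.exists_comap_pow_smul_top_le_ker g
  obtain ⟨h, h_extends, h_pow⟩ := exists_extend_of_comap_le_ker hE ((powTorsion a E).subtype ∘ₗ g)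
    (hn.trans (LinearMap.ker_le_ker_comp _ _))
  refine ⟨h.codRestrict _ fun y ↦ mem_powTorsion_iff.2 ⟨n, fun r hr ↦ ?_⟩, fun x hx ↦ ?_⟩
  · rw [← map_smul]
    exact h_pow (smul_mem_smul hr mem_top)
  · exact Subtype.ext congr($h_extends ⟨x, hx⟩)

end PowTorsion

section LocalCohomology

open localCohomology

variable {A : Type u} [CommRing A] {a : Ideal A}

namespace IsPowTorsion

lemma exists_shortExact [IsNoetherianRing A] {N : ModuleCat.{u} A} (hN : IsPowTorsion a N) :
    ∃ S : ShortComplex (ModuleCat.{u} A), S.X₁ = N ∧ S.ShortExact ∧ Injective S.X₂ ∧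
      IsPowTorsion a S.X₂ ∧ IsPowTorsion a S.X₃ := by
  obtain ⟨E, _, i, _⟩ := EnoughInjectives.presentation N
  have baer : Module.Baer A (powTorsion a E) :=
    baer_powTorsion (.of_injective (Module.injective_module_of_injective_object A E))
  have torsion : IsPowTorsion a (powTorsion a E) := isPowTorsion_coe_iff.2 le_rfl
  let j : N →ₗ[A] powTorsion a E :=
    i.hom.codRestrict _ fun x ↦ hN.range_le_powTorsion i.hom ⟨x, rfl⟩
  have j_injective : Function.Injective j :=
    (i.hom.injective_codRestrict_iff ..).2 ((ModuleCat.mono_iff_injective i).1 ‹_›)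
  have exactness := LinearMap.exact_map_mkQ_range j
  have mkQ_surjective := (LinearMap.range j).mkQ_surjective
  exact ⟨ModuleCat.shortComplexOfCompEqZero _ _ exactness.linearMap_comp_eq_zero, rfl,
    ModuleCat.shortComplex_shortExact _ exactness j_injective mkQ_surjective,
    Module.injective_object_of_injective_module (inj := baer.injective) .., torsion,
    torsion.of_surjective mkQ_surjective⟩

lemma exists_lift_ringModIdeals {E N : ModuleCat.{u} A} (hE : IsPowTorsion a E) (g : E ⟶ N)
    [Epi g] (t : ℕᵒᵖ) (k : (ringModIdeals (idealPowersDiagram a)).obj t ⟶ N) :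
    ∃ (s : ℕᵒᵖ) (f : s ⟶ t) (l : (ringModIdeals (idealPowersDiagram a)).obj s ⟶ E),
      l ≫ g = (ringModIdeals (idealPowersDiagram a)).map f ≫ k := by
  obtain ⟨e, he⟩ := (ModuleCat.epi_iff_surjective g).1 ‹_› (k (Submodule.Quotient.mk 1))
  obtain ⟨m, hm⟩ := isPowTorsion_iff.1 hE e
  let l : A ⧸ a ^ max t.unop m →ₗ[A] E :=
    Submodule.liftQ _ (LinearMap.toSpanSingleton A E e) fun r hr ↦
      hm r (Ideal.pow_le_pow_right (le_max_right _ _) hr)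
  refine ⟨op (max t.unop m), (homOfLE (le_max_left _ _)).op, ModuleCat.ofHom l, ?_⟩
  apply ModuleCat.hom_ext
  apply Submodule.linearMap_qext
  apply LinearMap.ext_ring
  exact congr(g.hom $(one_smul A e)).trans he

lemma proExtVanishes [IsNoetherianRing A] {N : ModuleCat.{u} A} (hN : IsPowTorsion a N) (n : ℕ) :
    ProExtVanishes.{u} (ringModIdeals (idealPowersDiagram a)) N (n + 1) := by
  induction n generalizing N with
  | zero =>
    obtain ⟨S, rfl, hS, _, h₂, -⟩ := hN.exists_shortExact
    have := hS.epi_g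
    exact .one_of_shortExact₁ hS (h₂.exists_lift_ringModIdeals S.g)
  | succ n ih =>
    obtain ⟨S, rfl, hS, _, -, h₃⟩ := hN.exists_shortExact
    exact .succ_of_shortExact₁ hS (ih h₃)

end IsPowTorsion

lemma subsingleton_localCohomology_succ_iff [IsNoetherianRing A]
    {S : ShortComplex (ModuleCat.{u} A)} (hS : S.ShortExact) (h₁ : IsPowTorsion a S.X₁) (n : ℕ) :
    Subsingleton ((localCohomology a (n + 1)).obj S.X₂) ↔
      Subsingleton ((localCohomology a (n + 1)).obj S.X₃) :=
  (subsingleton_ofDiagram_iff.{u, 0} _ n S.X₂).trans <|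
    .trans ⟨.of_shortExact₃ hS (h₁.proExtVanishes (n + 1)),
      .of_shortExact₂ hS (h₁.proExtVanishes n)⟩
    (subsingleton_ofDiagram_iff.{u, 0} _ n S.X₃).symm

variable {E F : Type u} [AddCommGroup E] [Module A E] [AddCommGroup F] [Module A F]

lemma cohDim_le_cohDim
    (h : ∀ n : ℕ, Nontrivial ((localCohomology a (n + 1)).obj (.of A E)) →
      Nontrivial ((localCohomology a (n + 1)).obj (.of A F))) :
    cohDim a E ≤ cohDim a F := by
  refine sSup_le ?_
  rintro _ ⟨_ | n, rfl, hn⟩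
  · exact zero_le
  · exact le_sSup ⟨n + 1, rfl, h n hn⟩

lemma smul_top_le_powTorsion_of_isLinkedBy_bot {b : Ideal A} (h : Ideal.IsLinkedBy E ⊥ a b) :
    b • (⊤ : Submodule A E) ≤ powTorsion a E := by
  obtain ⟨-, -, -, -, modColon_eq, -⟩ := h
  rw [← modColon_eq, Submodule.bot_smul]
  intro x hx
  simp only [Submodule.modColon, Submodule.mem_iInf] at hx
  exact mem_powTorsion_iff.2 ⟨1, fun r hr ↦ hx r (pow_one a ▸ hr)⟩

theorem stmt6_general [IsNoetherianRing A] {N : Submodule A E} (hN : N ≤ powTorsion a E) :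
    cohDim a E = cohDim a (E ⧸ N) := by
  have exactness := LinearMap.exact_subtype_mkQ N
  have shortExact := ModuleCat.shortComplex_shortExact
    (ModuleCat.shortComplexOfCompEqZero _ _ exactness.linearMap_comp_eq_zero) exactness
    N.subtype_injective N.mkQ_surjective
  have nontrivial_iff (n : ℕ) := not_congr <|
    subsingleton_localCohomology_succ_iff shortExact (isPowTorsion_coe_iff.2 hN) n
  simp only [not_subsingleton_iff_nontrivial] at nontrivial_iff
  exact le_antisymm (cohDim_le_cohDim fun n ↦ (nontrivial_iff n).1)
    (cohDim_le_cohDim fun n ↦ (nontrivial_iff n).2)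

end LocalCohomology

theorem stmt6 (a b : Ideal R) (h : Ideal.IsLinkedBy M ⊥ a b) :
    cohDim a M = cohDim a (M ⧸ (b • (⊤ : Submodule R M))) :=
  stmt6_general (smul_top_le_powTorsion_of_isLinkedBy_bot h)
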